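/- Fix an integer p ≥ 2 and 0 ≤ α ≤ p−1. Then the Besicovitch set E̲(α) = {x ∈ [0,1] : A̲(x) ≥ α} has Hausdorff dimension 1 if 0 ≤ α < (p−1)/2, and Hausdorff dimension h(α) if (p−1)/2 ≤ α ≤ p−1. -/

import Mathlib

open Filter MeasureTheory Set
open scoped ENNReal

noncomputable section

/-- Number of words of length `n` over the alphabet `{0, …, p-1}` whose digit sum lies
strictly between `n(α-δ)` and `n(α+δ)`; this is `h(α,n,δ)`. -/
def hcount (p n : ℕ) (α δ : ℝ) : ℕ :=
  Nat.card {w : Fin n → Fin p //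
    (n : ℝ) * (α - δ) < ∑ i, ((w i : ℕ) : ℝ) ∧ (∑ i, ((w i : ℕ) : ℝ)) < n * (α + δ)}

/-- The `p`-adic entropy function
`h(α) = lim_{δ→0} limsup_{n→∞} log h(α,n,δ) / (n log p)`.
Since the inner quantity is nondecreasing in `δ`, the limit as `δ → 0⁺` equals the
infimum over `δ > 0`. -/
def entropy (p : ℕ) (α : ℝ) : ℝ :=
  ⨅ δ : {δ : ℝ // 0 < δ},
    limsup (fun n : ℕ => Real.log (hcount p n α δ) / (n * Real.log p)) atTop

/-- Number of words of length `n` over `{0, …, p-1}` with digit sum `< n(α+δ)`;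
this is `h̄(α,n,δ)`. -/
def hbarCount (p n : ℕ) (α δ : ℝ) : ℕ :=
  Nat.card {w : Fin n → Fin p // (∑ i, ((w i : ℕ) : ℝ)) < n * (α + δ)}

/-- The `p`-adic upper entropy function
`h̄(α) = lim_{δ→0} limsup_{n→∞} log h̄(α,n,δ) / (n log p)`, the limit in `δ`
being the infimum over `δ > 0` by monotonicity in `δ`. -/
def upperEntropy (p : ℕ) (α : ℝ) : ℝ :=
  ⨅ δ : {δ : ℝ // 0 < δ},
    limsup (fun n : ℕ => Real.log (hbarCount p n α δ) / (n * Real.log p)) atTop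

/-- Number of words of length `n` over `{0, …, p-1}` with digit sum `> n(α-δ)`;
this is `h̲(α,n,δ)`. -/
def hlowCount (p n : ℕ) (α δ : ℝ) : ℕ :=
  Nat.card {w : Fin n → Fin p // (n : ℝ) * (α - δ) < ∑ i, ((w i : ℕ) : ℝ)}

/-- The `p`-adic lower entropy function
`h̲(α) = lim_{δ→0} liminf_{n→∞} log h̲(α,n,δ) / (n log p)`, the limit in `δ`
being the infimum over `δ > 0` by monotonicity in `δ`. -/
def lowerEntropy (p : ℕ) (α : ℝ) : ℝ :=
  ⨅ δ : {δ : ℝ // 0 < δ},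
    liminf (fun n : ℕ => Real.log (hlowCount p n α δ) / (n * Real.log p)) atTop

/-- The `(n+1)`-th digit `x_{n+1} ∈ {0,…,p-1}` of the non-terminating `p`-adic expansion
`x = 0.x₁x₂x₃…` of `x ∈ [0,1]` (the expansion not ending in all zeros). -/
def padicDigit (p : ℕ) (x : ℝ) (n : ℕ) : ℤ :=
  (⌈x * p ^ (n + 1)⌉ - 1) - p * (⌈x * p ^ n⌉ - 1)

/-- `S_n(T^m x) = x_{m+1} + ⋯ + x_{m+n}`, the digit sum of length `n` after shifting
`m` times. In particular `msum p x 0 n = S_n(x)`. -/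
def msum (p : ℕ) (x : ℝ) (m n : ℕ) : ℤ :=
  ∑ i ∈ Finset.range n, padicDigit p x (m + i)

/-- The `n`-th lower moving digit mean `M̲ₙ(x) = liminf_{m→∞} S_n(T^m x)/n`. -/
def lowerMn (p : ℕ) (x : ℝ) (n : ℕ) : ℝ :=
  liminf (fun m : ℕ => (msum p x m n : ℝ) / n) atTop

/-- The `n`-th upper moving digit mean `M̄ₙ(x) = limsup_{m→∞} S_n(T^m x)/n`. -/
def upperMn (p : ℕ) (x : ℝ) (n : ℕ) : ℝ :=
  limsup (fun m : ℕ => (msum p x m n : ℝ) / n) atTop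

/-- The lower moving digit mean `M̲(x) = lim_{n→∞} M̲ₙ(x)`; the limit exists by
subadditivity, hence equals the `liminf`. -/
def lowerM (p : ℕ) (x : ℝ) : ℝ := liminf (fun n : ℕ => lowerMn p x n) atTop

/-- The upper moving digit mean `M̄(x) = lim_{n→∞} M̄ₙ(x)`; the limit exists by
subadditivity, hence equals the `limsup`. -/
def upperM (p : ℕ) (x : ℝ) : ℝ := limsup (fun n : ℕ => upperMn p x n) atTop

/-- The lower digit mean `A̲(x) = liminf_{n→∞} S_n(x)/n`. -/
def lowerA (p : ℕ) (x : ℝ) : ℝ := liminf (fun n : ℕ => (msum p x 0 n : ℝ) / n) atTop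

/-- The upper digit mean `Ā(x) = limsup_{n→∞} S_n(x)/n`. -/
def upperA (p : ℕ) (x : ℝ) : ℝ := limsup (fun n : ℕ => (msum p x 0 n : ℝ) / n) atTop

/-- The Banach set `B(α,β) = {x ∈ [0,1] : M̲(x) = α, M̄(x) = β}`. -/
def BanachSet (p : ℕ) (α β : ℝ) : Set ℝ :=
  {x | x ∈ Icc (0 : ℝ) 1 ∧ lowerM p x = α ∧ upperM p x = β}

/-- The Besicovitch set `E̲(α) = {x ∈ [0,1] : A̲(x) ≥ α}`. -/
def besicovitchLower (p : ℕ) (α : ℝ) : Set ℝ :=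
  {x | x ∈ Icc (0 : ℝ) 1 ∧ α ≤ lowerA p x}

/-- The partition function `∑ₖ exp (t k)` over the digits `k ∈ {0, …, p-1}`. -/
def partitionFn (p : ℕ) (t : ℝ) : ℝ := ∑ k : Fin p, Real.exp (t * (k : ℕ))

/-- The Legendre-type functional `(log (∑ₖ exp (t k)) - t α) / log p`. -/
def tiltedEntropy (p : ℕ) (α t : ℝ) : ℝ :=
  (Real.log (partitionFn p t) - t * α) / Real.log p

lemma exp_le_partitionFn {p : ℕ} (t : ℝ) (k : Fin p) :
    Real.exp (t * (k : ℕ)) ≤ partitionFn p t :=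
  Finset.single_le_sum (f := fun k : Fin p => Real.exp (t * (k : ℕ)))
    (fun _ _ => (Real.exp_pos _).le) (Finset.mem_univ k)

lemma partitionFn_pos {p : ℕ} (hp : 2 ≤ p) (t : ℝ) : 0 < partitionFn p t :=
  (Real.exp_pos _).trans_le (exp_le_partitionFn t ⟨0, by omega⟩)

lemma mul_le_log_partitionFn {p : ℕ} (hp : 2 ≤ p) {α t : ℝ} (ht : 0 ≤ t)
    (hα' : α ≤ (p : ℝ) - 1) : t * α ≤ Real.log (partitionFn p t) := by
  rw [Real.le_log_iff_exp_le (partitionFn_pos hp t)]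
  refine le_trans ?_ (exp_le_partitionFn t ⟨p - 1, by omega⟩)
  have : ((p - 1 : ℕ) : ℝ) = p - 1 := by
    rw [Nat.cast_sub (by omega)]; simp
  simp only [this]
  gcongr

lemma partitionFn_pow (p n : ℕ) (t : ℝ) :
    partitionFn p t ^ n = ∑ w : Fin n → Fin p, Real.exp (t * ∑ i, ((w i : ℕ) : ℝ)) := by
  simp only [partitionFn, Finset.mul_sum, Real.exp_sum]
  rw [← Fintype.piFinset_univ, Finset.sum_prod_piFinset (s := Finset.univ)
    (g := fun _ k => Real.exp (t * ((k : Fin p) : ℕ)))]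
  simp

lemma hlowCount_mul_exp_le (p n : ℕ) {t : ℝ} (ht : 0 ≤ t) (α δ : ℝ) :
    hlowCount p n α δ * Real.exp (t * (n * (α - δ))) ≤ partitionFn p t ^ n := by
  classical
  rw [partitionFn_pow, hlowCount, Nat.card_eq_fintype_card, Fintype.card_subtype, ← nsmul_eq_mul]
  refine (Finset.card_nsmul_le_sum _
    (fun w : Fin n → Fin p => Real.exp (t * ∑ i, ((w i : ℕ) : ℝ))) _ fun w hw => ?_).trans
    (Finset.sum_le_sum_of_subset_of_nonneg (Finset.subset_univ _)
      fun _ _ _ => (Real.exp_pos _).le)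
  have := (Finset.mem_filter.1 hw).2
  gcongr

lemma hlowCount_le (p n : ℕ) (hp : 2 ≤ p) {t : ℝ} (ht : 0 ≤ t) (α δ : ℝ) :
    (hlowCount p n α δ : ℝ) ≤
      Real.exp (n * (Real.log (partitionFn p t) - t * (α - δ))) := by
  have h := hlowCount_mul_exp_le p n ht α δ
  rw [← le_div_iff₀ (Real.exp_pos _)] at h
  refine h.trans_eq ?_
  rw [← Real.exp_log (pow_pos (partitionFn_pos hp t) n), ← Real.exp_sub, Real.log_pow]
  congr 1; ring

lemma hcount_le_hlowCount (p n : ℕ) (α δ : ℝ) : hcount p n α δ ≤ hlowCount p n α δ :=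
  Nat.card_mono (Set.toFinite _) fun _ hw => hw.1

lemma log_hcount_div_nonneg (p n : ℕ) (α δ : ℝ) :
    0 ≤ Real.log (hcount p n α δ) / (n * Real.log p) := by
  have h₁ := Real.log_natCast_nonneg (hcount p n α δ)
  have h₂ := Real.log_natCast_nonneg p
  positivity

lemma log_hcount_div_le {p : ℕ} (hp : 2 ≤ p) {α t δ : ℝ} (hα' : α ≤ (p : ℝ) - 1) (ht : 0 ≤ t)
    (hδ : 0 ≤ δ) (n : ℕ) :
    Real.log (hcount p n α δ) / (n * Real.log p) ≤
      tiltedEntropy p α t + t * δ / Real.log p := by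
  have hlp : 0 < Real.log p := Real.log_pos (by exact_mod_cast hp)
  have hL := mul_le_log_partitionFn hp ht hα'
  have hR : 0 ≤ Real.log (partitionFn p t) - t * (α - δ) := by nlinarith
  have he : tiltedEntropy p α t + t * δ / Real.log p =
      (Real.log (partitionFn p t) - t * (α - δ)) / Real.log p := by
    rw [tiltedEntropy]; ring
  rw [he]
  rcases n.eq_zero_or_pos with rfl | hn
  · simpa using div_nonneg hR hlp.le
  rw [mul_comm, ← div_div, div_le_iff₀ (by exact_mod_cast hn), div_mul_eq_mul_div]
  gcongr
  rcases (hcount p n α δ).eq_zero_or_pos with h0 | h0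
  · rw [h0]; simpa using by positivity
  rw [Real.log_le_iff_le_exp (by exact_mod_cast h0), mul_comm]
  exact le_trans (by exact_mod_cast hcount_le_hlowCount p n α δ) (hlowCount_le p n hp ht α δ)

lemma isBoundedUnder_log_hcount {p : ℕ} (hp : 2 ≤ p) {α δ : ℝ} (hα' : α ≤ (p : ℝ) - 1)
    (hδ : 0 ≤ δ) : IsBoundedUnder (· ≤ ·) atTop
      fun n : ℕ => Real.log (hcount p n α δ) / (n * Real.log p) :=
  isBoundedUnder_of ⟨_, log_hcount_div_le hp hα' le_rfl hδ⟩

lemma isBoundedUnder_ge_log_hcount (p : ℕ) (α δ : ℝ) : IsBoundedUnder (· ≥ ·) atTop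
      fun n : ℕ => Real.log (hcount p n α δ) / (n * Real.log p) :=
  isBoundedUnder_of ⟨0, fun n => log_hcount_div_nonneg p n α δ⟩

lemma limsup_log_hcount_nonneg {p : ℕ} (hp : 2 ≤ p) {α δ : ℝ} (hα' : α ≤ (p : ℝ) - 1)
    (hδ : 0 ≤ δ) :
    0 ≤ limsup (fun n : ℕ => Real.log (hcount p n α δ) / (n * Real.log p)) atTop :=
  le_limsup_of_frequently_le (Frequently.of_forall fun n => log_hcount_div_nonneg p n α δ)
    (isBoundedUnder_log_hcount hp hα' hδ)

lemma entropy_nonneg {p : ℕ} (hp : 2 ≤ p) {α : ℝ} (hα' : α ≤ (p : ℝ) - 1) :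
    0 ≤ entropy p α :=
  Real.iInf_nonneg fun δ => limsup_log_hcount_nonneg hp hα' δ.2.le

lemma entropy_le_tiltedEntropy {p : ℕ} (hp : 2 ≤ p) {α t : ℝ} (hα' : α ≤ (p : ℝ) - 1)
    (ht : 0 ≤ t) : entropy p α ≤ tiltedEntropy p α t := by
  have hlp : 0 < Real.log p := Real.log_pos (by exact_mod_cast hp)
  have key : ∀ δ : ℝ, 0 < δ → entropy p α ≤ tiltedEntropy p α t + t * δ / Real.log p := by
    intro δ hδ
    refine (ciInf_le ⟨0, ?_⟩ (⟨δ, hδ⟩ : {δ : ℝ // 0 < δ})).trans ?_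
    · rintro _ ⟨δ', rfl⟩
      exact limsup_log_hcount_nonneg hp hα' δ'.2.le
    · exact limsup_le_of_le (isBoundedUnder_ge_log_hcount p α δ).isCoboundedUnder_le
        (Eventually.of_forall (log_hcount_div_le hp hα' ht hδ.le))
  have hlim : Tendsto (fun δ : ℝ => tiltedEntropy p α t + t * δ / Real.log p)
      (nhdsWithin 0 (Ioi 0)) (nhds (tiltedEntropy p α t)) := by
    have : Continuous fun δ : ℝ => tiltedEntropy p α t + t * δ / Real.log p := by fun_prop
    simpa using (this.tendsto 0).mono_left nhdsWithin_le_nhds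
  exact ge_of_tendsto hlim (eventually_nhdsWithin_of_forall fun δ hδ => key δ hδ)

lemma padicDigit_mem {p : ℕ} (hp : 2 ≤ p) (x : ℝ) (n : ℕ) :
    0 ≤ padicDigit p x n ∧ padicDigit p x n < p := by
  have hp0 : (0 : ℝ) < p := by exact_mod_cast (by omega : 0 < p)
  have h₁ := Int.ceil_lt_add_one (x * p ^ n)
  have h₂ := Int.le_ceil (x * p ^ n)
  have e : x * (p : ℝ) ^ (n + 1) = p * (x * p ^ n) := by ring
  constructor
  · have : (p : ℤ) * (⌈x * p ^ n⌉ - 1) < ⌈x * (p : ℝ) ^ (n + 1)⌉ := by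
      rw [Int.lt_ceil, e]; push_cast
      nlinarith
    rw [padicDigit]; omega
  · have : ⌈x * (p : ℝ) ^ (n + 1)⌉ ≤ (p : ℤ) * ⌈x * p ^ n⌉ := by
      rw [Int.ceil_le, e]; push_cast
      nlinarith
    rw [padicDigit, mul_sub]; omega

/-- The `i`-th `p`-adic digit as an element of `Fin p`. -/
def finDigit {p : ℕ} (hp : 2 ≤ p) (x : ℝ) (i : ℕ) : Fin p :=
  ⟨(padicDigit p x i).toNat, by have := padicDigit_mem hp x i; omega⟩

lemma coe_finDigit {p : ℕ} (hp : 2 ≤ p) (x : ℝ) (i : ℕ) :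
    (((finDigit hp x i : Fin p) : ℕ) : ℤ) = padicDigit p x i :=
  Int.toNat_of_nonneg (padicDigit_mem hp x i).1

lemma msum_eq_sum_finDigit {p : ℕ} (hp : 2 ≤ p) (x : ℝ) (n : ℕ) :
    (msum p x 0 n : ℝ) = ∑ i : Fin n, ((finDigit hp x i : ℕ) : ℝ) := by
  rw [msum, Finset.sum_range]
  push_cast
  refine Finset.sum_congr rfl fun i _ => ?_
  rw [zero_add, ← coe_finDigit hp]
  simp

lemma ceil_eq_of_padicDigit_eq {p : ℕ} {x y : ℝ} (hx : x ∈ Ioc (0 : ℝ) 1)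
    (hy : y ∈ Ioc (0 : ℝ) 1) {n : ℕ} (h : ∀ i < n, padicDigit p x i = padicDigit p y i) :
    ⌈x * (p : ℝ) ^ n⌉ = ⌈y * (p : ℝ) ^ n⌉ := by
  induction n with
  | zero =>
    have hc : ∀ z ∈ Ioc (0 : ℝ) 1, ⌈z * (p : ℝ) ^ 0⌉ = 1 := fun z hz => by
      rw [Int.ceil_eq_iff]; simpa using hz
    rw [hc x hx, hc y hy]
  | succ n ih =>
    have h₁ := h n n.lt_succ_self
    rw [padicDigit, padicDigit, ih fun i hi => h i (hi.trans n.lt_succ_self)] at h₁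
    omega

lemma abs_sub_le_of_ceil_eq {p : ℕ} (hp : 2 ≤ p) {x y : ℝ} {n : ℕ}
    (h : ⌈x * (p : ℝ) ^ n⌉ = ⌈y * (p : ℝ) ^ n⌉) : |x - y| ≤ ((p : ℝ) ^ n)⁻¹ := by
  have hp0 : (0 : ℝ) < (p : ℝ) ^ n := by
    have : (0 : ℝ) < p := by exact_mod_cast (by omega : 0 < p)
    positivity
  have h₁ := Int.ceil_lt_add_one (x * (p : ℝ) ^ n)
  have h₂ := Int.le_ceil (x * (p : ℝ) ^ n)
  have h₃ := Int.ceil_lt_add_one (y * (p : ℝ) ^ n)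
  have h₄ := Int.le_ceil (y * (p : ℝ) ^ n)
  rw [h] at h₁ h₂
  rw [← one_div, le_div_iff₀ hp0, ← abs_of_pos hp0, ← abs_mul, sub_mul, abs_le]
  constructor <;> linarith

/-- The points of `(0,1]` whose digit sums exceed `n (α - δ)` for all `n ≥ N`. -/
def largeSumSet (p : ℕ) (α δ : ℝ) (N : ℕ) : Set ℝ :=
  {x | x ∈ Ioc (0 : ℝ) 1 ∧ ∀ n ≥ N, (n : ℝ) * (α - δ) < msum p x 0 n}

lemma besicovitchLower_subset {p : ℕ} (hp : 2 ≤ p) {α δ : ℝ} (hδ : 0 < δ) :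
    besicovitchLower p α ⊆ {0} ∪ ⋃ N, largeSumSet p α δ N := by
  rintro x ⟨⟨h0, h1⟩, hx⟩
  rcases h0.eq_or_lt with rfl | h0
  · simp
  refine Or.inr (mem_iUnion.2 ?_)
  have hb : IsBoundedUnder (· ≥ ·) atTop fun n : ℕ => (msum p x 0 n : ℝ) / n :=
    isBoundedUnder_of ⟨0, fun n => by
      rw [msum_eq_sum_finDigit hp]; positivity⟩
  have hlt : α - δ < liminf (fun n : ℕ => (msum p x 0 n : ℝ) / n) atTop :=
    (sub_lt_self α hδ).trans_le hx
  obtain ⟨N, hN⟩ := eventually_atTop.1 (eventually_lt_of_lt_liminf hlt hb)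
  refine ⟨N + 1, ⟨h0, h1⟩, fun n hn => ?_⟩
  have hn0 : (0 : ℝ) < n := by exact_mod_cast (by omega : 0 < n)
  have := hN n (by omega)
  rwa [lt_div_iff₀ hn0, mul_comm] at this

lemma hausdorffMeasure_largeSumSet_le {p : ℕ} (hp : 2 ≤ p) {α t δ : ℝ} (ht : 0 ≤ t) (N : ℕ)
    {d : NNReal} (hd : tiltedEntropy p α t + t * δ / Real.log p ≤ d) :
    Measure.hausdorffMeasure (d : ℝ) (largeSumSet p α δ N) ≤ 1 := by
  classical
  have hp1 : (1 : ℝ) < p := by exact_mod_cast hp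
  have hlp : 0 < Real.log p := Real.log_pos hp1
  have hd' : Real.log (partitionFn p t) - t * (α - δ) ≤ d * Real.log p := by
    rw [← div_le_iff₀ hlp]
    refine le_trans (le_of_eq ?_) hd
    rw [tiltedEntropy]; ring
  let ι : ℕ → Type := fun n => {w : Fin n → Fin p // (n : ℝ) * (α - δ) < ∑ i, ((w i : ℕ) : ℝ)}
  let T : ∀ n, ι n → Set ℝ := fun n w =>
    {x | x ∈ Ioc (0 : ℝ) 1 ∧ ∀ i : Fin n, finDigit hp x i = w.1 i}
  let r : ℕ → ℝ≥0∞ := fun n => ENNReal.ofReal (((p : ℝ) ^ n)⁻¹)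
  have hr : Tendsto r atTop (nhds 0) := by
    have h : Tendsto (fun n : ℕ => ((p : ℝ) ^ n)⁻¹) atTop (nhds 0) :=
      (tendsto_pow_atTop_atTop_of_one_lt hp1).inv_tendsto_atTop
    simpa using ENNReal.tendsto_ofReal h
  have hdiam : ∀ n (w : ι n), Metric.ediam (T n w) ≤ r n := by
    intro n w
    refine Metric.ediam_le fun x hx y hy => ?_
    rw [edist_dist, Real.dist_eq]
    refine ENNReal.ofReal_le_ofReal (abs_sub_le_of_ceil_eq hp
      (ceil_eq_of_padicDigit_eq hx.1 hy.1 fun i hi => ?_))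
    rw [← coe_finDigit hp, ← coe_finDigit hp, hx.2 ⟨i, hi⟩, hy.2 ⟨i, hi⟩]
  have hcov : ∀ᶠ n in atTop, largeSumSet p α δ N ⊆ ⋃ w, T n w := by
    filter_upwards [eventually_ge_atTop N] with n hn x hx
    refine mem_iUnion.2 ⟨⟨fun i => finDigit hp x i, ?_⟩, hx.1, fun i => rfl⟩
    have := hx.2 n hn
    rwa [msum_eq_sum_finDigit hp] at this
  refine (Measure.hausdorffMeasure_le_liminf_sum (d : ℝ) _ r hr T
    (Eventually.of_forall hdiam) hcov).trans ?_
  refine liminf_le_of_le (by isBoundedDefault) fun b hb => ?_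
  obtain ⟨n, hn⟩ := hb.exists
  refine hn.trans ?_
  calc ∑ w : ι n, Metric.ediam (T n w) ^ (d : ℝ)
      ≤ ∑ w : ι n, r n ^ (d : ℝ) := by
        gcongr with w; exact hdiam n w
    _ = ENNReal.ofReal (hlowCount p n α δ * ((p : ℝ) ^ n)⁻¹ ^ (d : ℝ)) := by
        simp only [r]
        rw [Finset.sum_const, Finset.card_univ, nsmul_eq_mul, ENNReal.ofReal_mul (by positivity),
          ENNReal.ofReal_natCast, ENNReal.ofReal_rpow_of_nonneg (by positivity) d.coe_nonneg, hlowCount,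
          Nat.card_eq_fintype_card]
    _ ≤ 1 := by
        rw [ENNReal.ofReal_le_one]
        have hpow : ((p : ℝ) ^ n)⁻¹ ^ (d : ℝ) = Real.exp (-(n * (d * Real.log p))) := by
          rw [Real.rpow_def_of_pos (by positivity), Real.log_inv, Real.log_pow]
          congr 1; ring
        rw [hpow]
        calc _ ≤ Real.exp (n * (Real.log (partitionFn p t) - t * (α - δ))) *
              Real.exp (-(n * (d * Real.log p))) := by
              gcongr; exact hlowCount_le p n hp ht α δ
          _ ≤ 1 := by
              rw [← Real.exp_add, Real.exp_le_one_iff]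
              have : (n : ℝ) * (Real.log (partitionFn p t) - t * (α - δ)) ≤
                n * (d * Real.log p) := by gcongr
              linarith

lemma dimH_besicovitchLower_le {p : ℕ} (hp : 2 ≤ p) {α t : ℝ} (ht : 0 ≤ t) :
    dimH (besicovitchLower p α) ≤ ENNReal.ofReal (tiltedEntropy p α t) := by
  have key : ∀ δ : ℝ, 0 < δ → dimH (besicovitchLower p α) ≤
      ENNReal.ofReal (tiltedEntropy p α t + t * δ / Real.log p) := by
    intro δ hδ
    refine (dimH_mono (besicovitchLower_subset hp hδ)).trans ?_
    rw [dimH_union, dimH_singleton, dimH_iUnion, max_le_iff]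
    refine ⟨zero_le, iSup_le fun N => dimH_le_of_hausdorffMeasure_ne_top ?_⟩
    exact ((hausdorffMeasure_largeSumSet_le hp ht N (Real.le_coe_toNNReal _)).trans_lt
      ENNReal.one_lt_top).ne
  have hlim : Tendsto (fun δ : ℝ => ENNReal.ofReal (tiltedEntropy p α t + t * δ / Real.log p))
      (nhdsWithin 0 (Ioi 0)) (nhds (ENNReal.ofReal (tiltedEntropy p α t))) := by
    have : Continuous fun δ : ℝ => tiltedEntropy p α t + t * δ / Real.log p := by fun_prop
    simpa using ENNReal.tendsto_ofReal ((this.tendsto 0).mono_left nhdsWithin_le_nhds)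
  exact ge_of_tendsto hlim (eventually_nhdsWithin_of_forall fun δ hδ => key δ hδ)

/-- The probability weights `exp (t k) / ∑ⱼ exp (t j)` on the digits. -/
def tiltedPMF {p : ℕ} (hp : 2 ≤ p) (t : ℝ) : PMF (Fin p) :=
  PMF.ofFintype (fun k => ENNReal.ofReal (Real.exp (t * (k : ℕ)) / partitionFn p t)) (by
    have hZ := partitionFn_pos hp t
    rw [← ENNReal.ofReal_sum_of_nonneg fun k _ => by positivity, ← Finset.sum_div]
    change ENNReal.ofReal (partitionFn p t / partitionFn p t) = 1
    rw [div_self hZ.ne', ENNReal.ofReal_one])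

/-- The Bernoulli measure on digit sequences with weights `tiltedPMF`. -/
def tiltedMeasure {p : ℕ} (hp : 2 ≤ p) (t : ℝ) : Measure (ℕ → Fin p) :=
  Measure.infinitePi fun _ => (tiltedPMF hp t).toMeasure

instance {p : ℕ} (hp : 2 ≤ p) (t : ℝ) : IsProbabilityMeasure (tiltedMeasure hp t) := by
  unfold tiltedMeasure; infer_instance

lemma tiltedMeasure_cylinder {p : ℕ} (hp : 2 ≤ p) (t : ℝ) (w : ℕ → Fin p) (n : ℕ) :
    tiltedMeasure hp t {ω | ∀ i < n, ω i = w i} = ENNReal.ofReal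
      (Real.exp (t * ∑ i ∈ Finset.range n, ((w i : ℕ) : ℝ) - n * Real.log (partitionFn p t))) := by
  have hZ := partitionFn_pos hp t
  have hset : {ω : ℕ → Fin p | ∀ i < n, ω i = w i} =
      Set.pi (Finset.range n : Set ℕ) fun i => {w i} := by
    ext ω; simp [Set.mem_pi]
  rw [hset, tiltedMeasure, Measure.infinitePi_pi _ fun i _ => MeasurableSet.singleton _]
  simp only [PMF.toMeasure_apply_singleton _ _ (MeasurableSet.singleton _), tiltedPMF,
    PMF.ofFintype_apply]
  rw [← ENNReal.ofReal_prod_of_nonneg fun i _ => by positivity, Finset.prod_div_distrib,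
    Finset.prod_const, Finset.card_range, ← Real.exp_sum, ← Finset.mul_sum, Real.exp_sub,
    ← Real.log_pow, Real.exp_log (by positivity)]

lemma ae_tendsto_tiltedMeasure {p : ℕ} (hp : 2 ≤ p) {α t : ℝ}
    (hmean : ∑ k : Fin p, ((k : ℕ) : ℝ) * Real.exp (t * (k : ℕ)) = α * partitionFn p t) :
    ∀ᵐ ω ∂tiltedMeasure hp t,
      Tendsto (fun n : ℕ => (∑ i ∈ Finset.range n, ((ω i : ℕ) : ℝ)) / n) atTop (nhds α) := by
  have hZ := partitionFn_pos hp t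
  let f : Fin p → ℝ := fun k => ((k : ℕ) : ℝ)
  have hf : Measurable f := measurable_of_finite f
  have hindep : ProbabilityTheory.iIndepFun (fun (i : ℕ) (ω : ℕ → Fin p) => f (ω i))
      (tiltedMeasure hp t) :=
    ProbabilityTheory.iIndepFun_infinitePi (X := fun (_ : ℕ) => f) fun _ => hf
  have hmp : ∀ i : ℕ, MeasurePreserving (fun ω : ℕ → Fin p => ω i) (tiltedMeasure hp t)
      (tiltedPMF hp t).toMeasure := fun i =>
    measurePreserving_eval_infinitePi (fun _ => (tiltedPMF hp t).toMeasure) i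
  have hident : ∀ i : ℕ, ProbabilityTheory.IdentDistrib (fun ω : ℕ → Fin p => f (ω i))
      (fun ω => f (ω 0)) (tiltedMeasure hp t) (tiltedMeasure hp t) := fun i =>
    ProbabilityTheory.IdentDistrib.comp (u := f)
      ⟨(hmp i).measurable.aemeasurable, (hmp 0).measurable.aemeasurable,
        by rw [(hmp i).map_eq, (hmp 0).map_eq]⟩ hf
  have hint : Integrable (fun ω : ℕ → Fin p => f (ω 0)) (tiltedMeasure hp t) :=
    (hmp 0).integrable_comp_of_integrable (g := f) .of_finite
  have hval : ∫ ω, f (ω 0) ∂tiltedMeasure hp t = α := by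
    rw [← integral_map (f := f) (hmp 0).measurable.aemeasurable hf.aestronglyMeasurable,
      (hmp 0).map_eq, PMF.integral_eq_sum]
    have : ∀ k : Fin p, (tiltedPMF hp t k).toReal • f k =
        ((k : ℕ) : ℝ) * Real.exp (t * (k : ℕ)) / partitionFn p t := fun k => by
      rw [tiltedPMF, PMF.ofFintype_apply, ENNReal.toReal_ofReal (by positivity), smul_eq_mul]
      ring
    simp only [this]
    rw [← Finset.sum_div, hmean, mul_div_assoc, div_self hZ.ne', mul_one]
  have := ProbabilityTheory.strong_law_ae_real _ hint (fun i j hij => hindep.indepFun hij) hident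
  rwa [hval] at this

/-- Digit sequences with digit mean `α` whose partial sums are `δ`-close to `n α` from `N` on. -/
def typicalSet (p : ℕ) (α δ : ℝ) (N : ℕ) : Set (ℕ → Fin p) :=
  {ω | Tendsto (fun n : ℕ => (∑ i ∈ Finset.range n, ((ω i : ℕ) : ℝ)) / n) atTop (nhds α) ∧
    ∀ n ≥ N, (n : ℝ) * (α - δ) < ∑ i ∈ Finset.range n, ((ω i : ℕ) : ℝ) ∧
      ∑ i ∈ Finset.range n, ((ω i : ℕ) : ℝ) < n * (α + δ)}

lemma exists_typicalSet_ne_zero {p : ℕ} (hp : 2 ≤ p) {α t δ : ℝ} (hδ : 0 < δ)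
    (hmean : ∑ k : Fin p, ((k : ℕ) : ℝ) * Real.exp (t * (k : ℕ)) = α * partitionFn p t) :
    ∃ N, tiltedMeasure hp t (typicalSet p α δ N) ≠ 0 := by
  by_contra! h
  have h₀ : tiltedMeasure hp t (⋃ N, typicalSet p α δ N) = 0 := measure_iUnion_null h
  have h₁ : ∀ᵐ ω ∂tiltedMeasure hp t, ω ∈ ⋃ N, typicalSet p α δ N := by
    filter_upwards [ae_tendsto_tiltedMeasure hp hmean] with ω hω
    have hev := hω.eventually (Ioo_mem_nhds (sub_lt_self α hδ) (lt_add_of_pos_right α hδ))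
    obtain ⟨N, hN⟩ := eventually_atTop.1 hev
    refine mem_iUnion.2 ⟨N + 1, hω, fun n hn => ?_⟩
    have hn0 : (0 : ℝ) < n := by exact_mod_cast (by omega : 0 < n)
    obtain ⟨h₁, h₂⟩ := hN n (by omega)
    rw [lt_div_iff₀ hn0] at h₁
    rw [div_lt_iff₀ hn0] at h₂
    constructor <;> linarith
  have h₂ : ∀ᵐ ω ∂tiltedMeasure hp t, ω ∉ ⋃ N, typicalSet p α δ N :=
    measure_eq_zero_iff_ae_notMem.1 h₀
  obtain ⟨ω, hω, hω'⟩ := (h₁.and h₂).exists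
  exact hω' hω

lemma typicalSet_measure_le_hcount {p : ℕ} (hp : 2 ≤ p) {α t δ : ℝ} (ht : 0 ≤ t) {N n : ℕ}
    (hn : N ≤ n) :
    tiltedMeasure hp t (typicalSet p α δ N) ≤ ENNReal.ofReal (hcount p n α δ *
      Real.exp (n * (t * (α + δ) - Real.log (partitionFn p t)))) := by
  classical
  let ι : Type := {w : Fin n → Fin p // (n : ℝ) * (α - δ) < ∑ i, ((w i : ℕ) : ℝ) ∧
    (∑ i, ((w i : ℕ) : ℝ)) < n * (α + δ)}
  let e : ι → ℕ → Fin p := fun w i => if h : i < n then w.1 ⟨i, h⟩ else ⟨0, by omega⟩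
  have he : ∀ w : ι, ∑ i ∈ Finset.range n, ((e w i : ℕ) : ℝ) = ∑ i, ((w.1 i : ℕ) : ℝ) :=
    fun w => by
      rw [Finset.sum_range]
      simp [e]
  have hcov : typicalSet p α δ N ⊆ ⋃ w : ι, {ω | ∀ i < n, ω i = e w i} := by
    intro ω hω
    have := hω.2 n hn
    rw [Finset.sum_range] at this
    refine mem_iUnion.2 ⟨⟨fun i => ω i, this⟩, fun i hi => ?_⟩
    simp [e, hi]
  calc tiltedMeasure hp t (typicalSet p α δ N)
      ≤ ∑ w : ι, tiltedMeasure hp t {ω | ∀ i < n, ω i = e w i} :=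
        (measure_mono hcov).trans (measure_iUnion_fintype_le _ _)
    _ ≤ ∑ _w : ι, ENNReal.ofReal
          (Real.exp (n * (t * (α + δ) - Real.log (partitionFn p t)))) := by
        refine Finset.sum_le_sum fun w _ => ?_
        rw [tiltedMeasure_cylinder, he w]
        refine ENNReal.ofReal_le_ofReal (Real.exp_le_exp.2 ?_)
        have := mul_le_mul_of_nonneg_left w.2.2.le ht
        linarith
    _ = _ := by
        rw [Finset.sum_const, Finset.card_univ, nsmul_eq_mul, ENNReal.ofReal_mul (by positivity),
          ENNReal.ofReal_natCast, hcount, Nat.card_eq_fintype_card]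

lemma tiltedEntropy_le_entropy {p : ℕ} (hp : 2 ≤ p) {α t : ℝ} (hα' : α ≤ (p : ℝ) - 1)
    (ht : 0 ≤ t)
    (hmean : ∑ k : Fin p, ((k : ℕ) : ℝ) * Real.exp (t * (k : ℕ)) = α * partitionFn p t) :
    tiltedEntropy p α t ≤ entropy p α := by
  have hlp : 0 < Real.log p := Real.log_pos (by exact_mod_cast hp)
  have key : ∀ δ : ℝ, 0 < δ → tiltedEntropy p α t - t * δ / Real.log p ≤
      limsup (fun n : ℕ => Real.log (hcount p n α δ) / (n * Real.log p)) atTop := by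
    intro δ hδ
    obtain ⟨N, hN⟩ := exists_typicalSet_ne_zero hp hδ hmean
    set c := (tiltedMeasure hp t (typicalSet p α δ N)).toReal with hc
    have hc0 : 0 < c := ENNReal.toReal_pos hN (measure_ne_top _ _)
    have hbound : ∀ n : ℕ, N + 1 ≤ n → tiltedEntropy p α t - t * δ / Real.log p +
        Real.log c / Real.log p / n ≤ Real.log (hcount p n α δ) / (n * Real.log p) := by
      intro n hn
      have hn0 : (0 : ℝ) < n := by exact_mod_cast (by omega : 0 < n)
      have h := ENNReal.toReal_mono ENNReal.ofReal_ne_top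
        (typicalSet_measure_le_hcount (α := α) (δ := δ) hp ht (show N ≤ n by omega))
      rw [ENNReal.toReal_ofReal (by positivity), ← hc] at h
      have hh : (0 : ℝ) < hcount p n α δ :=
        pos_of_mul_pos_left (hc0.trans_le h) (Real.exp_pos _).le
      have h' := Real.log_le_log hc0 h
      rw [Real.log_mul hh.ne' (Real.exp_pos _).ne', Real.log_exp] at h'
      rw [le_div_iff₀ (by positivity)]
      have : (tiltedEntropy p α t - t * δ / Real.log p + Real.log c / Real.log p / n) *
          (n * Real.log p) = n * (Real.log (partitionFn p t) - t * (α + δ)) + Real.log c := by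
        rw [tiltedEntropy]; field_simp; ring
      rw [this]
      linarith
    have hlim : Tendsto (fun n : ℕ => tiltedEntropy p α t - t * δ / Real.log p +
        Real.log c / Real.log p / n) atTop (nhds (tiltedEntropy p α t - t * δ / Real.log p)) := by
      simpa using (tendsto_const_div_atTop_nhds_zero_nat (Real.log c / Real.log p)).const_add
        (tiltedEntropy p α t - t * δ / Real.log p)
    rw [← hlim.limsup_eq]
    exact limsup_le_limsup ((eventually_ge_atTop (N + 1)).mono hbound)
      hlim.isBoundedUnder_ge.isCoboundedUnder_le (isBoundedUnder_log_hcount hp hα' hδ.le)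
  have : Nonempty {δ : ℝ // 0 < δ} := ⟨⟨1, one_pos⟩⟩
  refine le_ciInf fun δ => ?_
  have hlim : Tendsto (fun ε : ℝ => tiltedEntropy p α t - t * ε / Real.log p)
      (nhdsWithin 0 (Ioi 0)) (nhds (tiltedEntropy p α t)) := by
    have : Continuous fun ε : ℝ => tiltedEntropy p α t - t * ε / Real.log p := by fun_prop
    simpa using (this.tendsto 0).mono_left nhdsWithin_le_nhds
  refine le_of_tendsto hlim ?_
  filter_upwards [Ioc_mem_nhdsGT δ.2] with ε hε
  refine (key ε hε.1).trans (limsup_le_limsup (Eventually.of_forall fun n => ?_)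
    (isBoundedUnder_ge_log_hcount p α ε).isCoboundedUnder_le
    (isBoundedUnder_log_hcount hp hα' δ.2.le))
  have hmono : hcount p n α ε ≤ hcount p n α δ := by
    refine Nat.card_mono (Set.toFinite _) fun w hw => ⟨lt_of_le_of_lt ?_ hw.1, hw.2.trans_le ?_⟩
    · have := hε.2; gcongr
    · have := hε.2; gcongr
  beta_reduce
  rcases (hcount p n α ε).eq_zero_or_pos with h0 | h0
  · rw [h0]; simpa using log_hcount_div_nonneg p n α δ
  · gcongr

/-- The integer with base-`p` digits `ω 0, …, ω (n-1)`, most significant first. -/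
def prefixVal {p : ℕ} (ω : ℕ → Fin p) : ℕ → ℕ
  | 0 => 0
  | n + 1 => p * prefixVal ω n + ω n

lemma eq_of_prefixVal_eq {p : ℕ} {ω ω' : ℕ → Fin p} {n : ℕ}
    (h : prefixVal ω n = prefixVal ω' n) : ∀ i < n, ω i = ω' i := by
  induction n with
  | zero => simp
  | succ n ih =>
    simp only [prefixVal] at h
    have hmod := congrArg (· % p) h
    simp only [Nat.mul_add_mod, Nat.mod_eq_of_lt (ω n).2, Nat.mod_eq_of_lt (ω' n).2] at hmod
    have hpre : prefixVal ω n = prefixVal ω' n := by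
      rw [hmod] at h
      exact Nat.eq_of_mul_eq_mul_left (Fin.pos (ω 0)) (by omega)
    intro i hi
    rcases Nat.lt_succ_iff_lt_or_eq.1 hi with hi | rfl
    · exact ih hpre i hi
    · exact Fin.ext hmod

lemma ofDigits_mul_pow {p : ℕ} (hp : 2 ≤ p) (ω : ℕ → Fin p) (n : ℕ) :
    Real.ofDigits ω * (p : ℝ) ^ n = prefixVal ω n + Real.ofDigits fun i => ω (i + n) := by
  have hp0 : (p : ℝ) ≠ 0 := by exact_mod_cast (by omega : p ≠ 0)
  have hsum : (∑ i ∈ Finset.range n, Real.ofDigitsTerm ω i) * (p : ℝ) ^ n = prefixVal ω n := by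
    induction n with
    | zero => simp [prefixVal]
    | succ n ih =>
      rw [Finset.sum_range_succ, add_mul, pow_succ, ← mul_assoc, ih, Real.ofDigitsTerm, prefixVal]
      push_cast
      field_simp
      ring
  rw [Real.ofDigits_eq_sum_add_ofDigits ω n, add_mul, hsum]
  field_simp

lemma ofDigits_pos {p : ℕ} (hp : 2 ≤ p) {ω : ℕ → Fin p} {i : ℕ} (hi : (ω i : ℕ) ≠ 0) :
    0 < Real.ofDigits ω := by
  have hp0 : (0 : ℝ) < p := by exact_mod_cast (by omega : 0 < p)
  refine Real.summable_ofDigitsTerm.tsum_pos (fun _ => Real.ofDigitsTerm_nonneg) i ?_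
  have : (0 : ℝ) < (ω i : ℕ) := by exact_mod_cast Nat.pos_of_ne_zero hi
  rw [Real.ofDigitsTerm]
  positivity

lemma padicDigit_ofDigits {p : ℕ} (hp : 2 ≤ p) {ω : ℕ → Fin p}
    (hω : ∀ n, ∃ i, (ω (i + n) : ℕ) ≠ 0) (n : ℕ) :
    padicDigit p (Real.ofDigits ω) n = (ω n : ℕ) := by
  have hceil : ∀ n, ⌈Real.ofDigits ω * (p : ℝ) ^ n⌉ = prefixVal ω n + 1 := by
    intro n
    obtain ⟨i, hi⟩ := hω n
    have h₁ := ofDigits_pos hp (ω := fun i => ω (i + n)) hi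
    have h₂ := Real.ofDigits_le_one fun i => ω (i + n)
    rw [Int.ceil_eq_iff, ofDigits_mul_pow hp]
    push_cast
    constructor <;> linarith
  rw [padicDigit, hceil, hceil, prefixVal]
  push_cast
  ring

lemma exists_ne_zero_of_tendsto {p : ℕ} {ω : ℕ → Fin p} {α : ℝ} (hα : 0 < α)
    (h : Tendsto (fun n : ℕ => (∑ i ∈ Finset.range n, ((ω i : ℕ) : ℝ)) / n) atTop (nhds α))
    (n : ℕ) : ∃ i, (ω (i + n) : ℕ) ≠ 0 := by
  by_contra! hz
  have hsum : ∀ m ≥ n, ∑ i ∈ Finset.range m, ((ω i : ℕ) : ℝ) =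
      ∑ i ∈ Finset.range n, ((ω i : ℕ) : ℝ) := by
    intro m hm
    refine (Finset.sum_subset (Finset.range_mono hm) fun i _ hi => ?_).symm
    have := hz (i - n)
    rw [Nat.sub_add_cancel (by simpa using hi)] at this
    exact_mod_cast this
  have h0 := tendsto_const_div_atTop_nhds_zero_nat (∑ i ∈ Finset.range n, ((ω i : ℕ) : ℝ))
  have h' : Tendsto (fun m : ℕ => (∑ i ∈ Finset.range m, ((ω i : ℕ) : ℝ)) / m) atTop (nhds 0) :=
    h0.congr' ((eventually_ge_atTop n).mono fun m hm => by simp only [hsum m hm])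
  exact hα.ne' (tendsto_nhds_unique h h')

lemma ofDigits_mem_besicovitchLower {p : ℕ} (hp : 2 ≤ p) {ω : ℕ → Fin p} {α : ℝ} (hα : 0 < α)
    (h : Tendsto (fun n : ℕ => (∑ i ∈ Finset.range n, ((ω i : ℕ) : ℝ)) / n) atTop (nhds α)) :
    Real.ofDigits ω ∈ besicovitchLower p α := by
  refine ⟨⟨Real.ofDigits_nonneg ω, Real.ofDigits_le_one ω⟩, le_of_eq ?_⟩
  have hdig := padicDigit_ofDigits hp (exists_ne_zero_of_tendsto hα h)
  rw [lowerA]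
  simp only [msum, zero_add, hdig]
  push_cast
  exact h.liminf_eq.symm

lemma tiltedMeasure_preimage_inter_typicalSet_le {p : ℕ} (hp : 2 ≤ p) {α t δ : ℝ} (ht : 0 ≤ t)
    {N n : ℕ} (hn : N ≤ n) {A : Set ℝ}
    (hA : Metric.ediam A ≤ ENNReal.ofReal (((p : ℝ) ^ n)⁻¹)) :
    tiltedMeasure hp t (Real.ofDigits ⁻¹' A ∩ typicalSet p α δ N) ≤
      5 * ENNReal.ofReal (Real.exp (n * (t * (α + δ) - Real.log (partitionFn p t)))) := by
  set M := ENNReal.ofReal (Real.exp (n * (t * (α + δ) - Real.log (partitionFn p t)))) with hM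
  set B := Real.ofDigits ⁻¹' A ∩ typicalSet p α δ N with hB
  have hpn : (0 : ℝ) < (p : ℝ) ^ n := by
    have : (0 : ℝ) < p := by exact_mod_cast (by omega : 0 < p)
    positivity
  rcases B.eq_empty_or_nonempty with hBe | ⟨ω₀, hω₀⟩
  · rw [hBe]; simp
  set J : Finset ℤ := Finset.Icc ((prefixVal ω₀ n : ℤ) - 2) (prefixVal ω₀ n + 2) with hJ
  have hcov : B ⊆ ⋃ j ∈ J, {ω ∈ B | (prefixVal ω n : ℤ) = j} := by
    intro ω hω
    simp only [mem_iUnion]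
    refine ⟨prefixVal ω n, ?_, hω, rfl⟩
    have hd : |Real.ofDigits ω - Real.ofDigits ω₀| ≤ ((p : ℝ) ^ n)⁻¹ := by
      have := (Metric.edist_le_ediam_of_mem (show Real.ofDigits ω ∈ A from hω.1)
        (show Real.ofDigits ω₀ ∈ A from hω₀.1)).trans hA
      rwa [edist_dist, ENNReal.ofReal_le_ofReal_iff (by positivity), Real.dist_eq] at this
    rw [← one_div, le_div_iff₀ hpn, ← abs_of_pos hpn, ← abs_mul, sub_mul, ofDigits_mul_pow hp, ofDigits_mul_pow hp, abs_le] at hd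
    have h₁ := Real.ofDigits_nonneg fun i => ω (i + n)
    have h₂ := Real.ofDigits_le_one fun i => ω (i + n)
    have h₃ := Real.ofDigits_nonneg fun i => ω₀ (i + n)
    have h₄ := Real.ofDigits_le_one fun i => ω₀ (i + n)
    have h₅ : (prefixVal ω n : ℝ) ≤ prefixVal ω₀ n + 2 := by linarith
    have h₆ : (prefixVal ω₀ n : ℝ) ≤ prefixVal ω n + 2 := by linarith
    have h₇ : prefixVal ω n ≤ prefixVal ω₀ n + 2 := by exact_mod_cast h₅
    have h₈ : prefixVal ω₀ n ≤ prefixVal ω n + 2 := by exact_mod_cast h₆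
    rw [hJ, Finset.mem_Icc]
    omega
  have hpiece : ∀ j ∈ J, tiltedMeasure hp t {ω ∈ B | (prefixVal ω n : ℤ) = j} ≤ M := by
    intro j _
    rcases Set.eq_empty_or_nonempty {ω ∈ B | (prefixVal ω n : ℤ) = j} with he | ⟨ω₁, hω₁, hj⟩
    · rw [he]; simp
    have hsub : {ω ∈ B | (prefixVal ω n : ℤ) = j} ⊆ {ω | ∀ i < n, ω i = ω₁ i} := fun ω hω =>
      eq_of_prefixVal_eq (by exact_mod_cast hω.2.trans hj.symm)
    refine (measure_mono hsub).trans ?_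
    rw [tiltedMeasure_cylinder]
    refine ENNReal.ofReal_le_ofReal (Real.exp_le_exp.2 ?_)
    have := mul_le_mul_of_nonneg_left (hω₁.2.2 n hn).2.le ht
    linarith
  calc tiltedMeasure hp t B ≤ ∑ j ∈ J, tiltedMeasure hp t {ω ∈ B | (prefixVal ω n : ℤ) = j} :=
        (measure_mono hcov).trans (measure_biUnion_finset_le _ _)
    _ ≤ ∑ _j ∈ J, M := Finset.sum_le_sum hpiece
    _ = 5 * M := by
        rw [Finset.sum_const, nsmul_eq_mul, hJ, Int.card_Icc]
        congr 1
        have : ((prefixVal ω₀ n : ℤ) + 2 + 1 - (prefixVal ω₀ n - 2)).toNat = 5 := by omega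
        rw [this]; norm_num

lemma hausdorffMeasure_ofDigits_image_ne_zero {p : ℕ} (hp : 2 ≤ p) {α t δ : ℝ} (ht : 0 ≤ t)
    {N : ℕ} (hN : tiltedMeasure hp t (typicalSet p α δ N) ≠ 0) {d : NNReal} (hd0 : 0 < d)
    (hd : (d : ℝ) ≤ tiltedEntropy p α t - t * δ / Real.log p) :
    Measure.hausdorffMeasure (d : ℝ) (Real.ofDigits '' typicalSet p α δ N) ≠ 0 := by
  have hp1 : (1 : ℝ) < p := by exact_mod_cast hp
  have hp0 : (0 : ℝ) < p := one_pos.trans hp1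
  have hlp : 0 < Real.log p := Real.log_pos hp1
  have hd0' : (0 : ℝ) < d := hd0
  have hmeas : Measurable (Real.ofDigits : (ℕ → Fin p) → ℝ) := Real.continuous_ofDigits.measurable
  set G := typicalSet p α δ N
  set ν : Measure ℝ := ((tiltedMeasure hp t).restrict G).map Real.ofDigits with hν
  set C : ℝ≥0∞ := 5 * ENNReal.ofReal ((p : ℝ) ^ (d : ℝ)) with hC
  have hC0 : C ≠ 0 := by
    have : 0 < (p : ℝ) ^ (d : ℝ) := by positivity
    simp [hC, this]
  have hCtop : C ≠ ⊤ := by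
    rw [hC]; exact ENNReal.mul_ne_top (by norm_num) ENNReal.ofReal_ne_top
  have hscale : ∀ n : ℕ, N ≤ n → ∀ A : Set ℝ, Metric.ediam A ≤ ENNReal.ofReal ((p : ℝ)⁻¹ ^ n) →
      ν A ≤ C * ENNReal.ofReal ((p : ℝ)⁻¹ ^ (n + 1)) ^ (d : ℝ) := by
    intro n hn A hA
    calc ν A ≤ ν (closure A) := measure_mono subset_closure
      _ = tiltedMeasure hp t (Real.ofDigits ⁻¹' closure A ∩ G) := by
          rw [hν, Measure.map_apply hmeas isClosed_closure.measurableSet,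
            Measure.restrict_apply (hmeas isClosed_closure.measurableSet)]
      _ ≤ 5 * ENNReal.ofReal (Real.exp (n * (t * (α + δ) - Real.log (partitionFn p t)))) :=
          tiltedMeasure_preimage_inter_typicalSet_le hp ht hn
            (by rwa [Metric.ediam_closure, ← inv_pow])
      _ ≤ 5 * ENNReal.ofReal ((p : ℝ) ^ (d : ℝ) * ((p : ℝ)⁻¹ ^ (n + 1)) ^ (d : ℝ)) := by
          gcongr
          have he : (p : ℝ) ^ (d : ℝ) * ((p : ℝ)⁻¹ ^ (n + 1)) ^ (d : ℝ) =
              Real.exp (-(n * (d * Real.log p))) := by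
            rw [Real.rpow_def_of_pos hp0, Real.rpow_def_of_pos (by positivity), Real.log_pow,
              Real.log_inv, ← Real.exp_add]
            congr 1; push_cast; ring
          rw [he, Real.exp_le_exp]
          have : d * Real.log p ≤ Real.log (partitionFn p t) - t * (α + δ) := by
            rw [← le_div_iff₀ hlp]
            refine hd.trans_eq ?_
            rw [tiltedEntropy]; ring
          have := mul_le_mul_of_nonneg_left this n.cast_nonneg
          linarith
      _ = C * ENNReal.ofReal ((p : ℝ)⁻¹ ^ (n + 1)) ^ (d : ℝ) := by
          rw [ENNReal.ofReal_mul (by positivity), hC, mul_assoc,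
            ENNReal.ofReal_rpow_of_nonneg (by positivity) d.coe_nonneg]
  have hinv0 : 0 < (p : ℝ)⁻¹ := by positivity
  have hinv1 : (p : ℝ)⁻¹ < 1 := inv_lt_one_of_one_lt₀ hp1
  have hdiam : ∀ A : Set ℝ, Metric.ediam A ≤ ENNReal.ofReal ((p : ℝ)⁻¹ ^ (N + 1)) →
      (C⁻¹ • ν) A ≤ Metric.ediam A ^ (d : ℝ) := by
    intro A hA
    rw [Measure.smul_apply, smul_eq_mul, ENNReal.inv_mul_le_iff hC0 hCtop]
    have hAtop : Metric.ediam A ≠ ⊤ := (hA.trans_lt ENNReal.ofReal_lt_top).ne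
    rcases eq_or_ne (Metric.ediam A) 0 with hA0 | hA0
    · have hlim : Tendsto (fun n : ℕ => C * ENNReal.ofReal ((p : ℝ)⁻¹ ^ (n + 1)) ^ (d : ℝ))
          atTop (nhds (C * 0 ^ (d : ℝ))) := by
        have h₁ : Tendsto (fun n : ℕ => (p : ℝ)⁻¹ ^ (n + 1)) atTop (nhds 0) :=
          (tendsto_pow_atTop_nhds_zero_of_lt_one hinv0.le hinv1).comp (tendsto_add_atTop_nat 1)
        have h₂ := ENNReal.tendsto_ofReal h₁
        rw [ENNReal.ofReal_zero] at h₂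
        exact ENNReal.Tendsto.const_mul (h₂.ennrpow_const _) (Or.inr hCtop)
      rw [hA0]
      refine ge_of_tendsto hlim ((eventually_ge_atTop N).mono fun n hn => hscale n hn A ?_)
      rw [hA0]; exact zero_le
    · have hr0 : 0 < (Metric.ediam A).toReal := ENNReal.toReal_pos hA0 hAtop
      have hrN : (Metric.ediam A).toReal ≤ (p : ℝ)⁻¹ ^ (N + 1) :=
        ENNReal.toReal_le_of_le_ofReal (by positivity) hA
      obtain ⟨n, hn₁, hn₂⟩ := exists_nat_pow_near_of_lt_one hr0
        (hrN.trans (pow_le_one₀ hinv0.le hinv1.le)) hinv0 hinv1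
      have hNn : N ≤ n := by
        have := (pow_lt_pow_iff_right_of_lt_one₀ hinv0 hinv1).1 (hn₁.trans_le hrN)
        omega
      refine (hscale n hNn A (ENNReal.le_ofReal_iff_toReal_le hAtop (by positivity) |>.2 hn₂)).trans
        ?_
      gcongr
      exact (ENNReal.ofReal_le_iff_le_toReal hAtop).2 hn₁.le
  have hle : C⁻¹ • ν ≤ Measure.hausdorffMeasure (d : ℝ) :=
    Measure.le_hausdorffMeasure _ _ _ (by rw [ENNReal.ofReal_pos]; positivity) hdiam
  have hpos : (C⁻¹ • ν) (Real.ofDigits '' G) ≠ 0 := by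
    rw [Measure.smul_apply, smul_eq_mul]
    refine mul_ne_zero (ENNReal.inv_ne_zero.2 hCtop) (ne_of_gt ?_)
    calc 0 < tiltedMeasure hp t G := pos_iff_ne_zero.2 hN
      _ = (tiltedMeasure hp t).restrict G G := (Measure.restrict_apply_self _ _).symm
      _ ≤ (tiltedMeasure hp t).restrict G (Real.ofDigits ⁻¹' (Real.ofDigits '' G)) :=
          measure_mono (subset_preimage_image _ _)
      _ ≤ ν (Real.ofDigits '' G) := Measure.le_map_apply hmeas.aemeasurable _
  exact fun h => hpos (le_antisymm ((hle _).trans_eq h) zero_le)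

lemma tiltedEntropy_le_dimH {p : ℕ} (hp : 2 ≤ p) {α t : ℝ} (hα : 0 < α) (ht : 0 ≤ t)
    (hmean : ∑ k : Fin p, ((k : ℕ) : ℝ) * Real.exp (t * (k : ℕ)) = α * partitionFn p t) :
    ENNReal.ofReal (tiltedEntropy p α t) ≤ dimH (besicovitchLower p α) := by
  have key : ∀ δ : ℝ, 0 < δ → ENNReal.ofReal (tiltedEntropy p α t - t * δ / Real.log p) ≤
      dimH (besicovitchLower p α) := by
    intro δ hδ
    rcases le_or_gt (tiltedEntropy p α t - t * δ / Real.log p) 0 with h0 | h0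
    · rw [ENNReal.ofReal_of_nonpos h0]; exact zero_le
    obtain ⟨N, hN⟩ := exists_typicalSet_ne_zero hp hδ hmean
    have hsub : Real.ofDigits '' typicalSet p α δ N ⊆ besicovitchLower p α := by
      rintro _ ⟨ω, hω, rfl⟩
      exact ofDigits_mem_besicovitchLower hp hα hω.1
    refine le_trans ?_ (dimH_mono hsub)
    exact le_dimH_of_hausdorffMeasure_ne_zero (hausdorffMeasure_ofDigits_image_ne_zero hp ht hN
      (Real.toNNReal_pos.2 h0) (Real.coe_toNNReal _ h0.le).le)
  have hlim : Tendsto (fun δ : ℝ => ENNReal.ofReal (tiltedEntropy p α t - t * δ / Real.log p))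
      (nhdsWithin 0 (Ioi 0)) (nhds (ENNReal.ofReal (tiltedEntropy p α t))) := by
    have : Continuous fun δ : ℝ => tiltedEntropy p α t - t * δ / Real.log p := by fun_prop
    simpa using ENNReal.tendsto_ofReal ((this.tendsto 0).mono_left nhdsWithin_le_nhds)
  exact le_of_tendsto hlim (eventually_nhdsWithin_of_forall fun δ hδ => key δ hδ)

lemma mean_zero_tilt (p : ℕ) :
    ∑ k : Fin p, ((k : ℕ) : ℝ) * Real.exp (0 * (k : ℕ)) =
      ((p : ℝ) - 1) / 2 * partitionFn p 0 := by
  have h : ∀ m : ℕ, ∑ i ∈ Finset.range m, (i : ℝ) = ((m : ℝ) - 1) / 2 * m := by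
    intro m
    induction m with
    | zero => simp
    | succ m ih => rw [Finset.sum_range_succ, ih]; push_cast; ring
  have hZ : partitionFn p 0 = p := by simp [partitionFn]
  rw [hZ, ← h p, Finset.sum_range]
  simp

lemma exists_tilt {p : ℕ} (hp : 2 ≤ p) {α : ℝ} (hα : ((p : ℝ) - 1) / 2 ≤ α)
    (hα' : α < (p : ℝ) - 1) : ∃ t : ℝ, 0 ≤ t ∧
      ∑ k : Fin p, ((k : ℕ) : ℝ) * Real.exp (t * (k : ℕ)) = α * partitionFn p t := by
  have hp2 : (2 : ℝ) ≤ p := by exact_mod_cast hp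
  set g : ℝ → ℝ := fun t => ∑ k : Fin p, (((k : ℕ) : ℝ) - α) * Real.exp (t * ((k : ℕ) - α))
    with hg
  have hgeq : ∀ t, g t = Real.exp (-(t * α)) *
      (∑ k : Fin p, ((k : ℕ) : ℝ) * Real.exp (t * (k : ℕ)) - α * partitionFn p t) := by
    intro t
    simp only [hg, partitionFn, Finset.mul_sum, ← Finset.sum_sub_distrib]
    refine Finset.sum_congr rfl fun k _ => ?_
    rw [mul_sub t, Real.exp_sub, Real.exp_neg]
    field_simp
  have hcont : Continuous g := by fun_prop
  set c : ℝ := (p : ℝ) - 1 - α with hc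
  have hc0 : 0 < c := by linarith
  set T : ℝ := (p : ℝ) ^ 2 / c ^ 2 with hT
  have hT0 : 0 ≤ T := by positivity
  have h0 : g 0 ≤ 0 := by
    rw [hgeq, mean_zero_tilt, ← sub_mul]
    refine mul_nonpos_of_nonneg_of_nonpos (Real.exp_pos _).le
      (mul_nonpos_of_nonpos_of_nonneg (by linarith) (partitionFn_pos hp 0).le)
  have hTpos : 0 ≤ g T := by
    have hlast : ((p - 1 : ℕ) : ℝ) = p - 1 := by
      rw [Nat.cast_sub (by omega)]; simp
    have hterm : ∀ k : Fin p, -(p : ℝ) ≤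
        (((k : ℕ) : ℝ) - α) * Real.exp (T * ((k : ℕ) - α)) := by
      intro k
      have hk0 : (0 : ℝ) ≤ (k : ℕ) := by positivity
      rcases le_total 0 (((k : ℕ) : ℝ) - α) with hk | hk
      · have : 0 ≤ (((k : ℕ) : ℝ) - α) * Real.exp (T * ((k : ℕ) - α)) := by positivity
        linarith
      · have h1 : Real.exp (T * ((k : ℕ) - α)) ≤ 1 :=
          Real.exp_le_one_iff.2 (mul_nonpos_of_nonneg_of_nonpos hT0 hk)
        nlinarith
    have htop : (p : ℝ) ^ 2 ≤ c * Real.exp (T * c) := by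
      have h1 := Real.add_one_le_exp (T * c)
      have h2 : c * (T * c) = (p : ℝ) ^ 2 := by rw [hT]; field_simp
      nlinarith
    let kl : Fin p := ⟨p - 1, by omega⟩
    have hsplit := Finset.add_sum_erase Finset.univ
      (fun k : Fin p => (((k : ℕ) : ℝ) - α) * Real.exp (T * ((k : ℕ) - α))) (Finset.mem_univ kl)
    have hrest := Finset.card_nsmul_le_sum (Finset.univ.erase kl)
      (fun k : Fin p => (((k : ℕ) : ℝ) - α) * Real.exp (T * ((k : ℕ) - α))) (-(p : ℝ))
      fun k _ => hterm k
    rw [Finset.card_erase_of_mem (Finset.mem_univ _), Finset.card_univ, Fintype.card_fin,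
      nsmul_eq_mul, hlast] at hrest
    simp only [kl, hlast] at hsplit
    change 0 ≤ ∑ k : Fin p, (((k : ℕ) : ℝ) - α) * Real.exp (T * ((k : ℕ) - α))
    rw [← hsplit]
    nlinarith
  obtain ⟨t, ht, hgt⟩ := intermediate_value_Icc hT0 hcont.continuousOn ⟨h0, hTpos⟩
  refine ⟨t, ht.1, ?_⟩
  rw [hgeq] at hgt
  have := (mul_eq_zero.1 hgt).resolve_left (Real.exp_pos _).ne'
  linarith

lemma tendsto_tiltedEntropy_top {p : ℕ} (hp : 2 ≤ p) :
    Tendsto (tiltedEntropy p ((p : ℝ) - 1)) atTop (nhds 0) := by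
  have hlp : 0 < Real.log p := Real.log_pos (by exact_mod_cast hp)
  have hterm : ∀ k : Fin p, Tendsto (fun t : ℝ => Real.exp (t * ((k : ℕ) - ((p : ℝ) - 1)))) atTop
      (nhds (if (k : ℕ) = p - 1 then 1 else 0)) := by
    intro k
    have hk : ((p - 1 : ℕ) : ℝ) = p - 1 := by
      rw [Nat.cast_sub (by omega)]; simp
    rw [← hk]
    split_ifs with h
    · simp [h]
    · have hlt : ((k : ℕ) : ℝ) - ((p - 1 : ℕ) : ℝ) < 0 := by
        have : (k : ℕ) < p - 1 := by omega
        rw [sub_neg]; exact_mod_cast this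
      exact Real.tendsto_exp_atBot.comp (tendsto_id.atTop_mul_const_of_neg hlt)
  have hsum := tendsto_finsetSum Finset.univ fun k _ => hterm k
  have hone : (∑ k : Fin p, if (k : ℕ) = p - 1 then (1 : ℝ) else 0) = 1 := by
    rw [Finset.sum_eq_single (⟨p - 1, by omega⟩ : Fin p)]
    · simp
    · intro k _ hk
      exact if_neg fun h => hk (Fin.ext h)
    · simp
  rw [hone] at hsum
  have hlog := ((Real.continuousAt_log one_ne_zero).tendsto.comp hsum).div_const (Real.log p)
  rw [Real.log_one, zero_div] at hlog
  refine hlog.congr fun t => ?_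
  have hfac : ∑ k : Fin p, Real.exp (t * ((k : ℕ) - ((p : ℝ) - 1))) =
      partitionFn p t / Real.exp (t * ((p : ℝ) - 1)) := by
    simp only [partitionFn, Finset.sum_div, ← Real.exp_sub, mul_sub]
  rw [Function.comp_apply, hfac, Real.log_div (partitionFn_pos hp t).ne' (Real.exp_pos _).ne',
    Real.log_exp, tiltedEntropy]

/-- For an integer `p ≥ 2` and `0 ≤ α ≤ p-1`,
`dim_H E̲(α) = 1` if `α < (p-1)/2`, and `dim_H E̲(α) = h(α)` if `(p-1)/2 ≤ α`. -/
theorem dimH_besicovitchLower (p : ℕ) (hp : 2 ≤ p) (α : ℝ)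
    (hα : 0 ≤ α) (hα' : α ≤ (p : ℝ) - 1) :
    (α < ((p : ℝ) - 1) / 2 → dimH (besicovitchLower p α) = 1) ∧
    (((p : ℝ) - 1) / 2 ≤ α →
      dimH (besicovitchLower p α) = ENNReal.ofReal (entropy p α)) := by
  have hp2 : (2 : ℝ) ≤ p := by exact_mod_cast hp
  constructor
  · intro hlt
    refine le_antisymm ((dimH_mono (subset_univ _)).trans_eq Real.dimH_univ) ?_
    have hsub : besicovitchLower p (((p : ℝ) - 1) / 2) ⊆ besicovitchLower p α :=
      fun x hx => ⟨hx.1, hlt.le.trans hx.2⟩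
    refine le_trans ?_ (dimH_mono hsub)
    refine le_trans (le_of_eq ?_)
      (tiltedEntropy_le_dimH hp (by linarith) le_rfl (mean_zero_tilt p))
    have hlp : Real.log p ≠ 0 := (Real.log_pos (by linarith)).ne'
    simp [tiltedEntropy, partitionFn, hlp]
  · intro hge
    rcases hα'.lt_or_eq with hlt | heq
    · obtain ⟨t, ht, hmean⟩ := exists_tilt hp hge hlt
      have hent : entropy p α = tiltedEntropy p α t :=
        le_antisymm (entropy_le_tiltedEntropy hp hα' ht) (tiltedEntropy_le_entropy hp hα' ht hmean)
      rw [hent]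
      exact le_antisymm (dimH_besicovitchLower_le hp ht)
        (tiltedEntropy_le_dimH hp (by linarith) ht hmean)
    · subst heq
      have hlim := tendsto_tiltedEntropy_top hp
      have hent : entropy p ((p : ℝ) - 1) = 0 :=
        le_antisymm (ge_of_tendsto hlim ((eventually_ge_atTop 0).mono fun t ht =>
          entropy_le_tiltedEntropy hp le_rfl ht)) (entropy_nonneg hp le_rfl)
      have hdim := ge_of_tendsto (ENNReal.tendsto_ofReal hlim)
        ((eventually_ge_atTop 0).mono fun t ht => dimH_besicovitchLower_le hp ht)
      rw [hent]
      exact le_antisymm hdim (by simp)
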